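/- arXiv:1308.5041 — 2 statements merged into one kernel-verified Lean document; each statement's English description precedes it below -/
import Mathlib

section
/- Let q be a prime power and let n ≥ 1, m ≥ 1 be integers. Then |π_q(q^n) − (q/(q−1))·q^n/n − (1/(q−1))·∑_{j=1}^{m−1} 𝒮_j(q/(q−1))·q^n/n^{j+1}| ≤ 11·q^{n/2}/n + m!·(3^{m+3}·q^{n−1}/n^{m+1} + 2^{m+1}/n), where 𝒮_j(x) = ∑_{i=0}^{j} (−1)^{j−i}·i!·S(j,i)·x^i. -/
/-- The Stirling numbers of the second kind: `stirling2 n k` is the number of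
partitions of a set with `n` elements into `k` nonempty blocks. -/
def stirling2 : ℕ → ℕ → ℕ
  | 0, 0 => 1
  | 0, _ + 1 => 0
  | _ + 1, 0 => 0
  | n + 1, k + 1 => (k + 1) * stirling2 n (k + 1) + stirling2 n k

/-- The polynomial `𝒮_j(x) = ∑_{i=0}^{j} (−1)^{j−i}·i!·S(j,i)·x^i` evaluated at a real `x`. -/
noncomputable def stirlingPoly (j : ℕ) (x : ℝ) : ℝ :=
  ∑ i ∈ Finset.range (j + 1),
    (-1 : ℝ) ^ (j - i) * (Nat.factorial i) * (stirling2 j i) * x ^ i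

/-!
Let `N k` be the number of monic irreducible polynomials of degree `k`. Gauss's formula
`∑ d ∣ k, d * N d = q ^ k` gives `N k = q ^ k / k` up to `2 * q ^ (k / 2) / k`, so it remains to
expand `∑ k ≤ n, q ^ k / k = q ^ n * ∑ l < n, q⁻¹ ^ l / (n - l)`. Replace `1 / (n - l)` by the first
`m` terms of its Taylor expansion in `l` and extend the sum over `l` to all natural numbers. The
resulting series is the main term: writing `(l + 1) ^ j` in rising factorials, with signed Stirling
numbers as coefficients, turns it into a combination of derivatives of the geometric series. The
error made for `l < n` and the tail `l ≥ n` are both dominated by series of rising factorials.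
-/

section HalfPowers

open Finset

-- By `hs`, `s ^ (n + 1) / (n + 1)` is at least `7 * n / (5 * (n + 1))` times `s ^ n / n`.
theorem sum_two_mul_pow_div_le_succ {s : ℝ} (hs : 7 / 5 ≤ s) {n : ℕ} (hn : n ≠ 0) {A B : ℝ}
    (hA : 0 ≤ A) (hsum : ∑ k ∈ Icc 1 n, 2 * s ^ k / k ≤ A * s ^ n / n)
    (hAB : A * (n + 1) ≤ (B - 2) * (7 / 5 * n)) :
    ∑ k ∈ Icc 1 (n + 1), 2 * s ^ k / k ≤ B * s ^ (n + 1) / (n + 1 : ℕ) := by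
  have hpos : (0 : ℝ) < n := by positivity
  have hB : 0 ≤ B - 2 := by
    by_contra! h
    nlinarith
  have hstep : A * (n + 1) ≤ (B - 2) * (s * n) := hAB.trans (by gcongr)
  calc ∑ k ∈ Icc 1 (n + 1), 2 * s ^ k / k
      ≤ A * s ^ n / n + 2 * s ^ (n + 1) / (n + 1 : ℕ) := by
        rw [sum_Icc_succ_top (by omega)]
        gcongr
    _ ≤ (B - 2) * s ^ (n + 1) / (n + 1 : ℕ) + 2 * s ^ (n + 1) / (n + 1 : ℕ) := by
        gcongr 1
        rw [div_le_div_iff₀ hpos (by positivity)]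
        push_cast
        calc A * s ^ n * (n + 1) = s ^ n * (A * (n + 1)) := by ring
          _ ≤ s ^ n * ((B - 2) * (s * n)) := by gcongr
          _ = _ := by ring
    _ = B * s ^ (n + 1) / (n + 1 : ℕ) := by ring

theorem sum_two_mul_pow_div_le {s : ℝ} (hs : 7 / 5 ≤ s) (n : ℕ) :
    ∑ k ∈ Icc 1 n, 2 * s ^ k / (k : ℝ) ≤ 11 * s ^ n / n := by
  -- The constants follow the recursion `B = 2 + 5 / 7 * A * (n + 1) / n`, rounded up; from `n = 7`
  -- on it maps `A = 11` to `B ≤ 11`.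
  have h1 : ∑ k ∈ Icc (1 : ℕ) 1, 2 * s ^ k / (k : ℝ) ≤ 2 * s ^ 1 / (1 : ℕ) := by simp
  have h2 := sum_two_mul_pow_div_le_succ hs one_ne_zero two_pos.le h1 (B := 4.9) (by norm_num)
  have h3 := sum_two_mul_pow_div_le_succ hs two_ne_zero (by norm_num) h2 (B := 7.3) (by norm_num)
  have h4 := sum_two_mul_pow_div_le_succ hs three_ne_zero (by norm_num) h3 (B := 9) (by norm_num)
  have h5 := sum_two_mul_pow_div_le_succ hs four_ne_zero (by norm_num) h4 (B := 10.1) (by norm_num)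
  have h6 := sum_two_mul_pow_div_le_succ hs (by norm_num) (by norm_num) h5 (B := 10.7) (by norm_num)
  have h7 := sum_two_mul_pow_div_le_succ hs (by norm_num) (by norm_num) h6 (B := 11) (by norm_num)
  have weaken {j : ℕ} {A : ℝ} (h : ∑ k ∈ Icc 1 j, 2 * s ^ k / (k : ℝ) ≤ A * s ^ j / j)
      (hA : A ≤ 11) : ∑ k ∈ Icc 1 j, 2 * s ^ k / (k : ℝ) ≤ 11 * s ^ j / j :=
    h.trans (by gcongr)
  rcases le_or_gt 7 n with hn | hn
  · induction n, hn using Nat.le_induction with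
    | base => exact h7
    | succ n hn ih =>
      have : (7 : ℝ) ≤ n := by exact_mod_cast hn
      exact sum_two_mul_pow_div_le_succ hs (by omega) (by norm_num) ih (by linarith)
  · interval_cases n
    · simp
    · exact weaken h1 (by norm_num)
    · exact weaken h2 (by norm_num)
    · exact weaken h3 (by norm_num)
    · exact weaken h4 (by norm_num)
    · exact weaken h5 (by norm_num)
    · exact weaken h6 (by norm_num)

end HalfPowers

section MonicIrreducibles

open Polynomial UniqueFactorizationMonoid

variable (F : Type*) [Field F] [Finite F]

open Classical in
/-- The monic irreducible polynomials of degree `d` over a finite field, as a finite set: they are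
extracted from the factors of `X ^ q ^ d - X`, which contain all of them. -/
noncomputable def monicIrreducibles (d : ℕ) : Finset F[X] :=
  {f ∈ (normalizedFactors (X ^ Nat.card F ^ d - X : F[X])).toFinset | f.natDegree = d}

variable {F}

theorem mem_normalizedFactors_X_pow_sub_X [DecidableEq F] {k : ℕ} (hk : k ≠ 0) {f : F[X]} :
    f ∈ normalizedFactors (X ^ Nat.card F ^ k - X : F[X]) ↔
      f.Monic ∧ Irreducible f ∧ f.natDegree ∣ k := by
  rw [Polynomial.mem_normalizedFactors_iff
    (FiniteField.X_pow_card_pow_sub_X_ne_zero F hk Finite.one_lt_card), and_left_comm]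
  exact and_congr_right fun _ => and_congr_right fun hf =>
    hf.natDegree_dvd_iff_dvd_X_pow_card_pow_sub_X.symm

theorem mem_monicIrreducibles {d : ℕ} {f : F[X]} :
    f ∈ monicIrreducibles F d ↔ f.Monic ∧ Irreducible f ∧ f.natDegree = d := by
  classical
  rcases eq_or_ne d 0 with rfl | hd
  · simpa [monicIrreducibles] using fun _ hf => hf.natDegree_pos.ne'
  · rw [monicIrreducibles, Finset.mem_filter, Multiset.mem_toFinset,
      mem_normalizedFactors_X_pow_sub_X hd, and_assoc, and_assoc]
    exact and_congr_right fun _ => and_congr_right fun _ =>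
      ⟨fun h => h.2, fun h => ⟨h.dvd, h⟩⟩

theorem card_monic_irreducible_natDegree_le (n : ℕ) :
    Nat.card {f : F[X] // f.Monic ∧ Irreducible f ∧ f.natDegree ≤ n} =
      ∑ d ∈ Finset.Icc 1 n, (monicIrreducibles F d).card := by
  classical
  have hdisj : (Finset.Icc 1 n : Set ℕ).PairwiseDisjoint (monicIrreducibles F) :=
    fun a _ b _ hab => Finset.disjoint_left.2 fun f ha hb =>
      hab ((mem_monicIrreducibles.1 ha).2.2.symm.trans (mem_monicIrreducibles.1 hb).2.2)
  rw [← Finset.card_biUnion hdisj]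
  refine Nat.subtype_card _ fun f => ?_
  simp only [Finset.mem_biUnion, Finset.mem_Icc, mem_monicIrreducibles]
  constructor
  · rintro ⟨_, ⟨-, hle⟩, hmonic, hirr, rfl⟩
    exact ⟨hmonic, hirr, hle⟩
  · rintro ⟨hmonic, hirr, hle⟩
    exact ⟨_, ⟨hirr.natDegree_pos, hle⟩, hmonic, hirr, rfl⟩

theorem nodup_normalizedFactors_X_pow_sub_X [DecidableEq F] {k : ℕ} (hk : k ≠ 0) :
    (normalizedFactors (X ^ Nat.card F ^ k - X : F[X])).Nodup := by
  rw [← squarefree_iff_nodup_normalizedFactors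
    (FiniteField.X_pow_card_pow_sub_X_ne_zero F hk Finite.one_lt_card)]
  obtain ⟨p, _⟩ := CharP.exists F
  have := Fintype.ofFinite F
  have hp : p ∣ Nat.card F := by
    rw [← CharP.cast_eq_zero_iff F p, Nat.card_eq_fintype_card, FiniteField.cast_card_eq_zero]
  exact (galois_poly_separable p _ (dvd_pow hp hk)).squarefree

theorem sum_natDegree_normalizedFactors_X_pow_sub_X [DecidableEq F] {k : ℕ} (hk : k ≠ 0) :
    ∑ f ∈ (normalizedFactors (X ^ Nat.card F ^ k - X : F[X])).toFinset, f.natDegree =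
      Nat.card F ^ k := by
  rw [Finset.sum_eq_multiset_sum, Multiset.toFinset_val,
    (nodup_normalizedFactors_X_pow_sub_X hk).dedup, ← natDegree_multiset_prod_of_monic _
      fun f hf => ((mem_normalizedFactors_X_pow_sub_X hk).1 hf).1,
    natDegree_eq_of_degree_eq (degree_eq_degree_of_associated (prod_normalizedFactors
      (FiniteField.X_pow_card_pow_sub_X_ne_zero F hk Finite.one_lt_card)))]
  exact FiniteField.X_pow_card_pow_sub_X_natDegree_eq F hk Finite.one_lt_card

theorem sum_divisors_mul_card_monicIrreducibles {k : ℕ} (hk : k ≠ 0) :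
    ∑ d ∈ k.divisors, d * (monicIrreducibles F d).card = Nat.card F ^ k := by
  classical
  rw [← sum_natDegree_normalizedFactors_X_pow_sub_X hk,
    ← Finset.sum_fiberwise_of_maps_to (t := k.divisors) (g := natDegree) fun f hf =>
      Nat.mem_divisors.2
        ⟨((mem_normalizedFactors_X_pow_sub_X hk).1 (Multiset.mem_toFinset.1 hf)).2.2, hk⟩]
  refine Finset.sum_congr rfl fun d hd => ?_
  have hfiber : {f ∈ (normalizedFactors (X ^ Nat.card F ^ k - X : F[X])).toFinset |
      f.natDegree = d} = monicIrreducibles F d := by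
    ext f
    rw [Finset.mem_filter, Multiset.mem_toFinset, mem_normalizedFactors_X_pow_sub_X hk,
      mem_monicIrreducibles, and_assoc, and_assoc]
    exact and_congr_right fun _ => and_congr_right fun _ =>
      ⟨fun h => h.2, fun h => ⟨h ▸ Nat.dvd_of_mem_divisors hd, h⟩⟩
  rw [hfiber, Finset.sum_congr rfl fun f hf => (mem_monicIrreducibles.1 hf).2.2, Finset.sum_const,
    smul_eq_mul, mul_comm]

theorem mul_card_monicIrreducibles_le {k : ℕ} (hk : k ≠ 0) :
    k * (monicIrreducibles F k).card ≤ Nat.card F ^ k := by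
  rw [← sum_divisors_mul_card_monicIrreducibles hk]
  exact Finset.single_le_sum (f := fun d => d * (monicIrreducibles F d).card)
    (fun _ _ => Nat.zero_le _) (Nat.mem_divisors_self k hk)

theorem le_half_of_mem_properDivisors {d k : ℕ} (hd : d ∈ k.properDivisors) : d ≤ k / 2 := by
  rw [Nat.le_div_iff_mul_le two_pos]
  calc d * 2 ≤ d * (k / d) := Nat.mul_le_mul_left d (Nat.one_lt_div_of_mem_properDivisors hd)
    _ = k := Nat.mul_div_cancel' (Nat.mem_properDivisors.1 hd).1

theorem sum_range_succ_pow_le {q : ℕ} (hq : 2 ≤ q) (n : ℕ) :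
    ∑ i ∈ Finset.range (n + 1), q ^ i ≤ 2 * q ^ n := by
  rw [Finset.sum_range_succ, two_mul]
  gcongr
  exact (Nat.geomSum_lt hq fun _ => Finset.mem_range.1).le

theorem natCard_pow_le_mul_card_monicIrreducibles_add {k : ℕ} (hk : k ≠ 0) :
    Nat.card F ^ k ≤ k * (monicIrreducibles F k).card + 2 * Nat.card F ^ (k / 2) := by
  rw [← sum_divisors_mul_card_monicIrreducibles hk, ← Nat.cons_self_properDivisors hk,
    Finset.sum_cons]
  gcongr
  calc ∑ d ∈ k.properDivisors, d * (monicIrreducibles F d).card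
      ≤ ∑ d ∈ k.properDivisors, Nat.card F ^ d :=
        Finset.sum_le_sum fun d hd =>
          mul_card_monicIrreducibles_le (Nat.pos_of_mem_properDivisors hd).ne'
    _ ≤ ∑ d ∈ Finset.range (k / 2 + 1), Nat.card F ^ d :=
        Finset.sum_le_sum_of_subset fun d hd =>
          Finset.mem_range_succ_iff.2 (le_half_of_mem_properDivisors hd)
    _ ≤ 2 * Nat.card F ^ (k / 2) := sum_range_succ_pow_le Finite.one_lt_card _

theorem natCard_pow_div_sub_card_monicIrreducibles_mem_Icc {k : ℕ} (hk : k ≠ 0) :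
    (Nat.card F : ℝ) ^ k / k - (monicIrreducibles F k).card ∈
      Set.Icc 0 (2 * √(Nat.card F : ℝ) ^ k / k) := by
  have hpos : (0 : ℝ) < k := by positivity
  have hupper : (k * (monicIrreducibles F k).card : ℝ) ≤ Nat.card F ^ k := by
    exact_mod_cast mul_card_monicIrreducibles_le hk
  have hlower : (Nat.card F : ℝ) ^ k ≤
      k * (monicIrreducibles F k).card + 2 * (Nat.card F : ℝ) ^ (k / 2) := by
    exact_mod_cast natCard_pow_le_mul_card_monicIrreducibles_add hk
  have hhalf : (Nat.card F : ℝ) ^ (k / 2) ≤ √(Nat.card F : ℝ) ^ k := by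
    have hone : 1 ≤ √(Nat.card F : ℝ) := Real.one_le_sqrt.2 (by exact_mod_cast Nat.card_pos)
    calc (Nat.card F : ℝ) ^ (k / 2) = √(Nat.card F : ℝ) ^ (2 * (k / 2)) := by
          rw [pow_mul, Real.sq_sqrt (Nat.cast_nonneg _)]
      _ ≤ √(Nat.card F : ℝ) ^ k := pow_le_pow_right₀ hone (Nat.mul_div_le _ _)
  rw [div_sub' hpos.ne']
  exact ⟨div_nonneg (by linarith) hpos.le, by gcongr; linarith⟩

variable (F) in
theorem abs_card_monic_irreducible_sub_sum_le (n : ℕ) :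
    |(Nat.card {f : F[X] // f.Monic ∧ Irreducible f ∧ f.natDegree ≤ n} : ℝ) -
        ∑ k ∈ Finset.Icc 1 n, (Nat.card F : ℝ) ^ k / k| ≤ 11 * √(Nat.card F : ℝ) ^ n / n := by
  have hbound {k : ℕ} (hk : k ∈ Finset.Icc 1 n) :=
    natCard_pow_div_sub_card_monicIrreducibles_mem_Icc (F := F)
      (Nat.one_le_iff_ne_zero.1 (Finset.mem_Icc.1 hk).1)
  have hsqrt : 7 / 5 ≤ √(Nat.card F : ℝ) := by
    have : (2 : ℝ) ≤ Nat.card F := by exact_mod_cast (Finite.one_lt_card : 1 < Nat.card F)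
    exact Real.le_sqrt_of_sq_le (by linarith)
  rw [card_monic_irreducible_natDegree_le, Nat.cast_sum, abs_sub_comm, ← Finset.sum_sub_distrib,
    abs_of_nonneg (Finset.sum_nonneg fun k hk => (hbound hk).1)]
  exact (Finset.sum_le_sum fun k hk => (hbound hk).2).trans (sum_two_mul_pow_div_le hsqrt n)

end MonicIrreducibles

section Stirling

open Finset Polynomial

theorem stirling2_eq_stirlingSecond : ∀ n k, stirling2 n k = Nat.stirlingSecond n k
  | 0, 0 => rfl
  | 0, _ + 1 => rfl
  | _ + 1, 0 => rfl
  | n + 1, k + 1 => by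
    rw [stirling2, Nat.stirlingSecond_succ_succ, stirling2_eq_stirlingSecond n,
      stirling2_eq_stirlingSecond n]

theorem X_pow_eq_sum_stirlingSecond_mul_descPochhammer (R : Type*) [CommRing R] (j : ℕ) :
    (X : R[X]) ^ j = ∑ i ∈ range (j + 1), (j.stirlingSecond i : R[X]) * descPochhammer R i := by
  induction j with
  | zero => simp
  | succ j ih =>
    have hshift : ∑ i ∈ range (j + 1), (j.stirlingSecond i : R[X]) * (i * descPochhammer R i) =
        ∑ i ∈ range (j + 1),
          (j.stirlingSecond (i + 1) : R[X]) * ((i + 1) * descPochhammer R (i + 1)) := by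
      rw [sum_range_succ', sum_range_succ _ j,
        Nat.stirlingSecond_eq_zero_of_lt (Nat.lt_succ_self j)]
      simp
    calc (X : R[X]) ^ (j + 1)
        = ∑ i ∈ range (j + 1), (j.stirlingSecond i : R[X]) * descPochhammer R (i + 1) +
          ∑ i ∈ range (j + 1), (j.stirlingSecond i : R[X]) * (i * descPochhammer R i) := by
          rw [pow_succ, ih, sum_mul, ← sum_add_distrib]
          refine sum_congr rfl fun i _ => ?_
          rw [descPochhammer_succ_right]
          ring
      _ = ∑ i ∈ range (j + 2), ((j + 1).stirlingSecond i : R[X]) * descPochhammer R i := by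
          rw [hshift, sum_range_succ' _ (j + 1), Nat.stirlingSecond_succ_zero, Nat.cast_zero,
            zero_mul, add_zero, ← sum_add_distrib]
          refine sum_congr rfl fun i _ => ?_
          rw [Nat.stirlingSecond_succ_succ]
          push_cast
          ring

theorem pow_eq_sum_stirlingSecond_mul_ascPochhammer {R : Type*} [CommRing R] (x : R) (j : ℕ) :
    x ^ j = ∑ i ∈ range (j + 1),
      (-1) ^ (j - i) * (j.stirlingSecond i : R) * (ascPochhammer R i).eval x := by
  have hneg := congrArg (eval (-x)) (X_pow_eq_sum_stirlingSecond_mul_descPochhammer R j)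
  simp only [eval_pow, eval_X, eval_finsetSum, eval_mul, eval_natCast] at hneg
  calc x ^ j = (-1) ^ j * (-x) ^ j := by rw [← mul_pow, neg_one_mul, neg_neg]
    _ = _ := by
      rw [hneg, mul_sum]
      refine sum_congr rfl fun i hi => ?_
      obtain ⟨c, rfl⟩ := Nat.exists_eq_add_of_le (Nat.lt_succ_iff.1 (mem_range.1 hi))
      have hreflect := ascPochhammer_eval_neg_eq_descPochhammer R (-x) i
      rw [neg_neg] at hreflect
      rw [hreflect, Nat.add_sub_cancel_left, pow_add]
      ring

theorem hasSum_ascFactorial_mul_geometric {𝕜 : Type*} [NormedDivisionRing 𝕜] {r : 𝕜}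
    (hr : ‖r‖ < 1) (k : ℕ) :
    HasSum (fun l : ℕ => ((l + 1).ascFactorial k : 𝕜) * r ^ l)
      (k.factorial / (1 - r) ^ (k + 1)) := by
  convert! (hasSum_choose_mul_geometric_of_norm_lt_one k hr).mul_left (k.factorial : 𝕜) using 1
  · funext l
    rw [Nat.ascFactorial_eq_factorial_mul_choose, Nat.cast_mul, mul_assoc]
  · rw [mul_one_div]

theorem hasSum_succ_pow_mul_geometric {y : ℝ} (hy : |y| < 1) (j : ℕ) :
    HasSum (fun l : ℕ => ((l + 1 : ℕ) : ℝ) ^ j * y ^ l) ((1 - y)⁻¹ * stirlingPoly j (1 - y)⁻¹) := by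
  convert! hasSum_sum (s := range (j + 1)) fun i _ =>
    (hasSum_ascFactorial_mul_geometric (r := y) hy i).mul_left
      ((-1 : ℝ) ^ (j - i) * j.stirlingSecond i) using 1
  · funext l
    rw [pow_eq_sum_stirlingSecond_mul_ascPochhammer, sum_mul]
    simp only [ascPochhammer_nat_eq_natCast_ascFactorial, mul_assoc]
  · rw [stirlingPoly, mul_sum]
    refine sum_congr rfl fun i _ => ?_
    rw [stirling2_eq_stirlingSecond, div_eq_mul_inv, ← inv_pow]
    ring

theorem hasSum_pow_mul_geometric {y : ℝ} (hy : |y| < 1) {j : ℕ} (hj : j ≠ 0) :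
    HasSum (fun l : ℕ => (l : ℝ) ^ j * y ^ l) (y * (1 - y)⁻¹ * stirlingPoly j (1 - y)⁻¹) := by
  rw [← hasSum_nat_add_iff' 1]
  convert! (hasSum_succ_pow_mul_geometric hy j).mul_left y using 1
  · funext l
    ring
  · simp [hj, mul_assoc]

end Stirling

section GeometricExpansion

open Finset

/-- The Taylor polynomial of degree less than `m` of `x ↦ (n - x)⁻¹` at `0`. -/
def invSubTaylor {K : Type*} [Field K] (m : ℕ) (n x : K) : K :=
  ∑ j ∈ range m, x ^ j / n ^ (j + 1)

theorem inv_sub_sub_invSubTaylor {K : Type*} [Field K] {n x : K} (hn : n ≠ 0) (hx : n - x ≠ 0)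
    (m : ℕ) : (n - x)⁻¹ - invSubTaylor m n x = x ^ m / (n ^ m * (n - x)) := by
  induction m with
  | zero => simp [invSubTaylor]
  | succ m ih =>
    rw [invSubTaylor, sum_range_succ, ← sub_sub, ← invSubTaylor, ih]
    field_simp
    ring

theorem invSubTaylor_nonneg {n x : ℝ} (m : ℕ) (hn : 0 ≤ n) (hx : 0 ≤ x) :
    0 ≤ invSubTaylor m n x :=
  sum_nonneg fun _ _ => by positivity

theorem hasSum_geometric_mul_invSubTaylor {y : ℝ} (hy : |y| < 1) {m : ℕ} (hm : m ≠ 0) (n : ℝ) :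
    HasSum (fun l : ℕ => y ^ l * invSubTaylor m n l)
      ((1 - y)⁻¹ / n + y * (1 - y)⁻¹ *
        ∑ j ∈ Icc 1 (m - 1), stirlingPoly j (1 - y)⁻¹ / n ^ (j + 1)) := by
  have hrange : range m = insert 0 (Icc 1 (m - 1)) := by
    ext i
    simp only [mem_range, mem_insert, mem_Icc]
    omega
  have hconst : HasSum (fun l : ℕ => y ^ l / n) ((1 - y)⁻¹ / n) :=
    (hasSum_geometric_of_abs_lt_one hy).div_const n
  have hpow := hasSum_sum (s := Icc 1 (m - 1)) fun j hj =>
    (hasSum_pow_mul_geometric hy (Nat.one_le_iff_ne_zero.1 (mem_Icc.1 hj).1)).div_const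
      (n ^ (j + 1))
  convert! hconst.add hpow using 1
  · funext l
    rw [invSubTaylor, hrange, sum_insert (by simp), mul_add, mul_sum]
    congr 1
    · rw [pow_zero, zero_add, pow_one, mul_one_div]
    · exact sum_congr rfl fun j _ => by ring
  · simp only [mul_sum, mul_div_assoc]

theorem pow_mul_succ_le_ascFactorial {m : ℕ} (hm : m ≠ 0) (l : ℕ) :
    l ^ m * (l + 1) ≤ l.ascFactorial (m + 1) := by
  rw [Nat.ascFactorial_succ, mul_comm]
  exact Nat.mul_le_mul (by omega) (Nat.pow_succ_le_ascFactorial l m)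

theorem inv_sub_sub_invSubTaylor_mem_Icc {l n m : ℕ} (hl : l < n) (hm : m ≠ 0) :
    ((n : ℝ) - l)⁻¹ - invSubTaylor m (n : ℝ) l ∈
      Set.Icc 0 ((l.ascFactorial (m + 1) : ℝ) / n ^ (m + 1)) := by
  have hn : (0 : ℝ) < n := by exact_mod_cast hl.pos
  have hln : (l : ℝ) + 1 ≤ n := by exact_mod_cast hl
  have hsub : (0 : ℝ) < n - l := by linarith
  have hasc : (l : ℝ) ^ m * (l + 1) ≤ l.ascFactorial (m + 1) := by
    exact_mod_cast pow_mul_succ_le_ascFactorial hm l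
  have hle : (n : ℝ) ≤ (l + 1) * (n - l) := by
    nlinarith [(Nat.cast_nonneg l : (0 : ℝ) ≤ l)]
  rw [inv_sub_sub_invSubTaylor hn.ne' hsub.ne']
  refine ⟨by positivity, ?_⟩
  rw [div_le_div_iff₀ (by positivity) (by positivity)]
  calc (l : ℝ) ^ m * n ^ (m + 1) = (l : ℝ) ^ m * n ^ m * n := by ring
    _ ≤ (l : ℝ) ^ m * n ^ m * ((l + 1) * (n - l)) := by gcongr
    _ = (l : ℝ) ^ m * (l + 1) * (n ^ m * (n - l)) := by ring
    _ ≤ l.ascFactorial (m + 1) * (n ^ m * (n - l)) := by gcongr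

theorem invSubTaylor_add_le (m n h : ℕ) :
    invSubTaylor m (n : ℝ) (h + n : ℕ) ≤ ∑ j ∈ range m, ((h + 1).ascFactorial j : ℝ) / n := by
  refine sum_le_sum fun j _ => ?_
  have hratio : ((h + n : ℕ) : ℝ) / n ≤ (h + 1 : ℕ) := by
    rcases n.eq_zero_or_pos with rfl | hn
    · simp [Nat.cast_add_one_pos h |>.le]
    · rw [div_le_iff₀ (by positivity)]
      exact_mod_cast (by nlinarith : h + n ≤ (h + 1) * n)
  calc ((h + n : ℕ) : ℝ) ^ j / n ^ (j + 1) = (((h + n : ℕ) : ℝ) / n) ^ j / n := by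
        rw [div_pow, pow_succ, div_div]
    _ ≤ ((h + 1 : ℕ) : ℝ) ^ j / n := by gcongr
    _ ≤ ((h + 1).ascFactorial j : ℝ) / n := by
        gcongr
        exact_mod_cast Nat.pow_succ_le_ascFactorial (h + 1) j

theorem sum_geometric_mul_inv_sub_sub_mem_Icc {y : ℝ} (hy0 : 0 ≤ y) (hy1 : y < 1) (n : ℕ) {m : ℕ}
    (hm : m ≠ 0) :
    ∑ l ∈ range n, y ^ l * (((n : ℝ) - l)⁻¹ - invSubTaylor m (n : ℝ) l) ∈
      Set.Icc 0 (y * ((m + 1).factorial / (1 - y) ^ (m + 2)) / (n : ℝ) ^ (m + 1)) := by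
  have hremainder {l : ℕ} (hl : l ∈ range n) :=
    inv_sub_sub_invSubTaylor_mem_Icc (mem_range.1 hl) hm
  have hsum : HasSum (fun l : ℕ => (l.ascFactorial (m + 1) : ℝ) * y ^ l)
      (y * ((m + 1).factorial / (1 - y) ^ (m + 2))) := by
    rw [← hasSum_nat_add_iff' 1]
    convert! (hasSum_ascFactorial_mul_geometric (r := y)
      (by rwa [Real.norm_of_nonneg hy0]) (m + 1)).mul_left y using 1
    · funext l
      ring
    · simp [Nat.zero_ascFactorial]
  refine ⟨sum_nonneg fun l hl => mul_nonneg (pow_nonneg hy0 l) (hremainder hl).1, ?_⟩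
  calc ∑ l ∈ range n, y ^ l * (((n : ℝ) - l)⁻¹ - invSubTaylor m (n : ℝ) l)
      ≤ ∑ l ∈ range n, (l.ascFactorial (m + 1) : ℝ) * y ^ l / n ^ (m + 1) := by
        refine sum_le_sum fun l hl => ?_
        rw [mul_comm _ (y ^ l), mul_div_assoc]
        exact mul_le_mul_of_nonneg_left (hremainder hl).2 (pow_nonneg hy0 l)
    _ ≤ _ := sum_le_hasSum _ (fun l _ => by positivity) (hsum.div_const _)

theorem hasSum_geometric_mul_invSubTaylor_tail_mem_Icc {y : ℝ} (hy0 : 0 ≤ y) (hy1 : y < 1)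
    {m n : ℕ} {a : ℝ}
    (ha : HasSum (fun h : ℕ => y ^ (h + n) * invSubTaylor m (n : ℝ) (h + n : ℕ)) a) :
    a ∈ Set.Icc 0 (y ^ n * ((∑ j ∈ range m, j.factorial / (1 - y) ^ (j + 1)) / n)) := by
  have hmajorant := ((hasSum_sum (s := range m) fun j _ => hasSum_ascFactorial_mul_geometric
    (r := y) (by rwa [Real.norm_of_nonneg hy0]) j).div_const (n : ℝ)).mul_left (y ^ n)
  refine ⟨ha.nonneg fun h => mul_nonneg (pow_nonneg hy0 _) (invSubTaylor_nonneg m n.cast_nonneg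
    (Nat.cast_nonneg _)), hasSum_le (fun h => ?_) ha hmajorant⟩
  calc y ^ (h + n) * invSubTaylor m (n : ℝ) (h + n : ℕ)
      ≤ y ^ (h + n) * ∑ j ∈ range m, ((h + 1).ascFactorial j : ℝ) / n := by
        gcongr
        exact invSubTaylor_add_le m n h
    _ = y ^ n * ((∑ j ∈ range m, ((h + 1).ascFactorial j : ℝ) * y ^ h) / n) := by
        rw [← sum_div, ← sum_mul, pow_add]
        ring

theorem abs_sum_geometric_div_sub_le {y : ℝ} (hy0 : 0 ≤ y) (hy1 : y < 1) (n : ℕ) {m : ℕ}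
    (hm : m ≠ 0) {a : ℝ} (ha : HasSum (fun l : ℕ => y ^ l * invSubTaylor m (n : ℝ) l) a) :
    |∑ l ∈ range n, y ^ l * ((n : ℝ) - l)⁻¹ - a| ≤
      y * ((m + 1).factorial / (1 - y) ^ (m + 2)) / (n : ℝ) ^ (m + 1) +
        y ^ n * ((∑ j ∈ range m, j.factorial / (1 - y) ^ (j + 1)) / n) := by
  have hhead := sum_geometric_mul_inv_sub_sub_mem_Icc hy0 hy1 n hm
  have htail := hasSum_geometric_mul_invSubTaylor_tail_mem_Icc (m := m) (n := n) hy0 hy1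
    ((hasSum_nat_add_iff' n).2 ha)
  simp only [mul_sub, sum_sub_distrib, Set.mem_Icc] at hhead htail
  rw [abs_le]
  constructor <;> linarith

theorem sum_Icc_pow_div_eq {K : Type*} [Field K] {q : K} (hq : q ≠ 0) (n : ℕ) :
    ∑ k ∈ Icc 1 n, q ^ k / k = q ^ n * ∑ l ∈ range n, q⁻¹ ^ l * ((n : K) - l)⁻¹ := by
  have hIcc : Icc 1 n = Ico 1 (n + 1) := rfl
  rw [hIcc, sum_Ico_eq_sum_range, Nat.add_sub_cancel, ← sum_range_reflect, mul_sum]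
  refine sum_congr rfl fun l hl => ?_
  obtain ⟨c, rfl⟩ := Nat.exists_eq_add_of_lt (mem_range.1 hl)
  have hindex : 1 + (l + c + 1 - 1 - l) = c + 1 := by omega
  rw [hindex, inv_pow, add_assoc, pow_add q l, Nat.cast_add l, add_sub_cancel_left]
  field_simp

theorem abs_sum_pow_div_sub_le {q : ℝ} (hq : 1 < q) {n m : ℕ} (hn : n ≠ 0) (hm : m ≠ 0) :
    |∑ k ∈ Icc 1 n, q ^ k / k - (q / (q - 1) * q ^ n / n + 1 / (q - 1) *
        ∑ j ∈ Icc 1 (m - 1), stirlingPoly j (q / (q - 1)) * q ^ n / (n : ℝ) ^ (j + 1))| ≤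
      (m + 1).factorial / (1 - q⁻¹) ^ (m + 2) * q ^ (n - 1) / (n : ℝ) ^ (m + 1) +
        (∑ j ∈ range m, j.factorial / (1 - q⁻¹) ^ (j + 1)) / n := by
  have hq0 : 0 < q := one_pos.trans hq
  have hy0 : 0 ≤ q⁻¹ := inv_nonneg.2 hq0.le
  have hy1 : q⁻¹ < 1 := inv_lt_one_of_one_lt₀ hq
  have hq1 : q - 1 ≠ 0 := sub_ne_zero.2 hq.ne'
  have hseries :=
    hasSum_geometric_mul_invSubTaylor (abs_lt.2 ⟨by linarith, hy1⟩) hm (n : ℝ)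
  rw [show (1 - q⁻¹)⁻¹ = q / (q - 1) by field_simp,
    show q⁻¹ * (q / (q - 1)) = 1 / (q - 1) by field_simp] at hseries
  have hpow : q ^ n * q⁻¹ = q ^ (n - 1) := by
    rw [← div_eq_mul_inv, div_eq_iff hq0.ne', ← pow_succ, Nat.sub_add_cancel (by omega)]
  have hexpansion : q / (q - 1) * q ^ n / n + 1 / (q - 1) *
      ∑ j ∈ Icc 1 (m - 1), stirlingPoly j (q / (q - 1)) * q ^ n / (n : ℝ) ^ (j + 1) =
      q ^ n * (q / (q - 1) / n + 1 / (q - 1) *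
        ∑ j ∈ Icc 1 (m - 1), stirlingPoly j (q / (q - 1)) / (n : ℝ) ^ (j + 1)) := by
    simp only [mul_div_right_comm _ (q ^ n), ← sum_mul]
    ring
  rw [hexpansion, sum_Icc_pow_div_eq hq0.ne', ← mul_sub, abs_mul, abs_of_pos (pow_pos hq0 n)]
  refine (mul_le_mul_of_nonneg_left (abs_sum_geometric_div_sub_le hy0 hy1 n hm hseries)
    (pow_pos hq0 n).le).trans_eq ?_
  rw [mul_add, mul_div_assoc, ← mul_assoc (q ^ n), hpow, inv_pow,
    mul_inv_cancel_left₀ (pow_ne_zero n hq0.ne')]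
  ring

theorem sum_factorial_mul_two_pow_le (m : ℕ) :
    ∑ j ∈ range m, j.factorial * 2 ^ (j + 1) ≤ m.factorial * 2 ^ (m + 1) := by
  induction m with
  | zero => simp
  | succ m ih =>
    rw [sum_range_succ]
    calc _ ≤ m.factorial * 2 ^ (m + 1) + m.factorial * 2 ^ (m + 1) := by gcongr
      _ = m.factorial * 2 ^ (m + 2) := by ring
      _ ≤ (m + 1).factorial * 2 ^ (m + 2) := by
        gcongr
        omega

theorem succ_mul_two_pow_le_three_pow (m : ℕ) : (m + 1) * 2 ^ (m + 2) ≤ 3 ^ (m + 3) := by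
  induction m with
  | zero => norm_num
  | succ m ih =>
    calc (m + 2) * 2 ^ (m + 3) = 2 * ((m + 1) * 2 ^ (m + 2)) + 2 ^ (m + 3) := by ring
      _ ≤ 2 * 3 ^ (m + 3) + 3 ^ (m + 3) := by
        gcongr
        norm_num
      _ = 3 ^ (m + 4) := by ring

theorem abs_sum_pow_div_sub_le_of_two_le {q : ℝ} (hq : 2 ≤ q) {n m : ℕ} (hn : n ≠ 0)
    (hm : m ≠ 0) :
    |∑ k ∈ Icc 1 n, q ^ k / k - (q / (q - 1) * q ^ n / n + 1 / (q - 1) *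
        ∑ j ∈ Icc 1 (m - 1), stirlingPoly j (q / (q - 1)) * q ^ n / (n : ℝ) ^ (j + 1))| ≤
      m.factorial *
        (3 ^ (m + 3) * q ^ (n - 1) / (n : ℝ) ^ (m + 1) + 2 ^ (m + 1) / n) := by
  have hhalf : 1 / 2 ≤ 1 - q⁻¹ := by
    have := inv_anti₀ two_pos hq
    linarith
  have hdiv (i k : ℕ) : (i.factorial : ℝ) / (1 - q⁻¹) ^ k ≤ i.factorial * 2 ^ k :=
    calc (i.factorial : ℝ) / (1 - q⁻¹) ^ k ≤ i.factorial / (1 / 2) ^ k := by gcongr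
      _ = i.factorial * 2 ^ k := by rw [one_div, inv_pow, div_inv_eq_mul]
  have hhead : ((m + 1).factorial : ℝ) / (1 - q⁻¹) ^ (m + 2) ≤ m.factorial * 3 ^ (m + 3) := by
    refine (hdiv _ _).trans ?_
    rw [Nat.factorial_succ, mul_comm (m + 1), Nat.cast_mul, mul_assoc]
    gcongr
    exact_mod_cast succ_mul_two_pow_le_three_pow m
  have htail : ∑ j ∈ range m, (j.factorial : ℝ) / (1 - q⁻¹) ^ (j + 1) ≤
      m.factorial * 2 ^ (m + 1) :=
    (sum_le_sum fun j _ => hdiv j (j + 1)).trans (by exact_mod_cast sum_factorial_mul_two_pow_le m)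
  calc _ ≤ _ := abs_sum_pow_div_sub_le (by linarith) hn hm
    _ ≤ m.factorial * 3 ^ (m + 3) * q ^ (n - 1) / (n : ℝ) ^ (m + 1) +
        m.factorial * 2 ^ (m + 1) / n := by gcongr
    _ = _ := by ring

end GeometricExpansion

theorem stmt_0 (q : ℕ) (hq : IsPrimePow q) (F : Type*) [Field F] [Fintype F]
    (hF : Fintype.card F = q) (n m : ℕ) (hn : 1 ≤ n) (hm : 1 ≤ m) :
    |(Nat.card {f : Polynomial F // f.Monic ∧ Irreducible f ∧ f.natDegree ≤ n} : ℝ) -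
        ((q : ℝ) / (q - 1)) * (q : ℝ) ^ n / n -
        (1 / ((q : ℝ) - 1)) * ∑ j ∈ Finset.Icc 1 (m - 1),
          stirlingPoly j ((q : ℝ) / (q - 1)) * (q : ℝ) ^ n / (n : ℝ) ^ (j + 1)| ≤
      11 * (q : ℝ) ^ ((n : ℝ) / 2) / n +
        (Nat.factorial m) *
          (3 ^ (m + 3) * (q : ℝ) ^ (n - 1) / (n : ℝ) ^ (m + 1) + 2 ^ (m + 1) / n) := by
  have hcount := abs_card_monic_irreducible_sub_sum_le F n
  rw [Nat.card_eq_fintype_card (α := F), hF] at hcount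
  have hexpansion := abs_sum_pow_div_sub_le_of_two_le (q := q) (by exact_mod_cast hq.two_le)
    (Nat.one_le_iff_ne_zero.1 hn) (Nat.one_le_iff_ne_zero.1 hm)
  rw [Real.rpow_div_two_eq_sqrt _ q.cast_nonneg, Real.rpow_natCast, sub_sub]
  exact (abs_sub_le _ _ _).trans (add_le_add hcount hexpansion)
end

section
/- For all real q ≥ 2 and all integers n ≥ 1 and m ≥ 1, one has ∑_{n/2 ≤ k ≤ n−1} (k^m/q^k)·(1/(1 − k/n)) ≤ (n/1.3^{n/2})·m!/(0.75·q·(1 − 1/(0.75·q))^{m+1}), where the sum ranges over integers k with n/2 ≤ k ≤ n−1. -/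
/-!
Since `k ≤ n - 1`, the factor `1 / (1 - k / n)` is at most `n`. Split `1 / q ^ k` as
`a ^ k * (1 / (a * q)) ^ k` with `a = 0.75`; for `b = 1.3` we have `a * b ≤ 1`, so `k ≥ n / 2` gives
`a ^ k ≤ 1 / b ^ (n / 2)`. What remains is part of the series `∑ k ^ m * r ^ k` with
`r = 1 / (a * q) < 1`, which is compared with the negative binomial series through
`(k + 1) ^ m ≤ (k + 1) ⋯ (k + m) = m! * (k + m).choose m`.
-/

open Finset

theorem succ_pow_le_factorial_mul_choose (k m : ℕ) :
    (k + 1) ^ m ≤ m.factorial * (k + m).choose m := by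
  rw [← Nat.ascFactorial_eq_factorial_mul_choose]
  exact Nat.pow_succ_le_ascFactorial _ _

theorem sum_succ_pow_mul_geometric_le {r : ℝ} (hr₀ : 0 ≤ r) (hr₁ : r < 1) (m : ℕ) (s : Finset ℕ) :
    ∑ k ∈ s, ((k : ℝ) + 1) ^ m * r ^ k ≤ m.factorial / (1 - r) ^ (m + 1) := by
  have negBinomial : HasSum (fun k : ℕ ↦ ((k + m).choose m : ℝ) * r ^ k) (1 / (1 - r) ^ (m + 1)) :=
    hasSum_choose_mul_geometric_of_norm_lt_one m (by rwa [Real.norm_of_nonneg hr₀])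
  calc ∑ k ∈ s, ((k : ℝ) + 1) ^ m * r ^ k
      ≤ ∑ k ∈ s, m.factorial * (((k + m).choose m : ℝ) * r ^ k) := by
        refine sum_le_sum fun k _ ↦ ?_
        rw [← mul_assoc]
        gcongr
        exact_mod_cast succ_pow_le_factorial_mul_choose k m
    _ = m.factorial * ∑ k ∈ s, ((k + m).choose m : ℝ) * r ^ k := (mul_sum ..).symm
    _ ≤ m.factorial * (1 / (1 - r) ^ (m + 1)) := by
        gcongr
        exact sum_le_hasSum s (fun k _ ↦ by positivity) negBinomial
    _ = m.factorial / (1 - r) ^ (m + 1) := mul_one_div _ _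

theorem sum_Ico_one_pow_mul_geometric_le {r : ℝ} (hr₀ : 0 ≤ r) (hr₁ : r < 1) (m n : ℕ) :
    ∑ k ∈ Ico 1 n, (k : ℝ) ^ m * r ^ k ≤ r * (m.factorial / (1 - r) ^ (m + 1)) := by
  calc ∑ k ∈ Ico 1 n, (k : ℝ) ^ m * r ^ k
      = r * ∑ k ∈ range (n - 1), ((k : ℝ) + 1) ^ m * r ^ k := by
        rw [sum_Ico_eq_sum_range, mul_sum]
        refine sum_congr rfl fun k _ ↦ ?_
        push_cast
        ring
    _ ≤ r * (m.factorial / (1 - r) ^ (m + 1)) := by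
        gcongr
        exact sum_succ_pow_mul_geometric_le hr₀ hr₁ m _

theorem one_div_one_sub_div_le {K : Type*} [Field K] [LinearOrder K] [IsStrictOrderedRing K]
    {x y : K} (hy : 0 < y) (hxy : x + 1 ≤ y) : 1 / (1 - x / y) ≤ y := by
  rw [one_sub_div hy.ne', one_div_div]
  exact div_le_self hy.le (le_sub_iff_add_le'.2 hxy)

theorem pow_le_one_div_rpow {a b x : ℝ} {k : ℕ} (ha : 0 ≤ a) (hb : 1 ≤ b) (hab : a * b ≤ 1)
    (hx : x ≤ k) : a ^ k ≤ 1 / b ^ x := by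
  have hb₀ : 0 < b := one_pos.trans_le hb
  rw [le_div_iff₀ (Real.rpow_pos_of_pos hb₀ x)]
  calc a ^ k * b ^ x ≤ a ^ k * b ^ (k : ℝ) := by gcongr
    _ = (a * b) ^ k := by rw [Real.rpow_natCast, mul_pow]
    _ ≤ 1 := pow_le_one₀ (mul_nonneg ha hb₀.le) hab

theorem pow_div_pow_mul_one_div_one_sub_div_le {a b q : ℝ} (ha : 0 < a) (hb : 1 ≤ b)
    (hab : a * b ≤ 1) (hq : 0 < q) {k n : ℕ} (m : ℕ) (hkn : k < n) (hnk : n ≤ 2 * k) :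
    (k : ℝ) ^ m / q ^ k * (1 / (1 - (k : ℝ) / n)) ≤
      (n : ℝ) / b ^ ((n : ℝ) / 2) * ((k : ℝ) ^ m * (1 / (a * q)) ^ k) := by
  have hn : (0 : ℝ) < n := by exact_mod_cast k.zero_le.trans_lt hkn
  have hhalf : (n : ℝ) / 2 ≤ k := by
    rw [div_le_iff₀' two_pos]
    exact_mod_cast hnk
  calc (k : ℝ) ^ m / q ^ k * (1 / (1 - (k : ℝ) / n))
      ≤ (k : ℝ) ^ m / q ^ k * n := by
        gcongr
        exact one_div_one_sub_div_le hn (by exact_mod_cast hkn)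
    _ = n * ((k : ℝ) ^ m * (1 / (a * q)) ^ k) * a ^ k := by
        rw [one_div_pow, mul_pow]
        field_simp
    _ ≤ n * ((k : ℝ) ^ m * (1 / (a * q)) ^ k) * (1 / b ^ ((n : ℝ) / 2)) := by
        gcongr
        exact pow_le_one_div_rpow ha.le hb hab hhalf
    _ = (n : ℝ) / b ^ ((n : ℝ) / 2) * ((k : ℝ) ^ m * (1 / (a * q)) ^ k) := by ring

theorem stmt_8_general {a b q : ℝ} (ha : 0 < a) (hb : 1 ≤ b) (hab : a * b ≤ 1) (haq : 1 < a * q)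
    (n m : ℕ) :
    ∑ k ∈ (range n).filter (fun k ↦ n ≤ 2 * k),
        (k : ℝ) ^ m / q ^ k * (1 / (1 - (k : ℝ) / n)) ≤
      (n : ℝ) / b ^ ((n : ℝ) / 2) *
        m.factorial / (a * q * (1 - 1 / (a * q)) ^ (m + 1)) := by
  have hq : 0 < q := pos_of_mul_pos_right (one_pos.trans haq) ha.le
  have hr : 1 / (a * q) < 1 := (div_lt_one (by positivity)).2 haq
  have hsubset : (range n).filter (fun k ↦ n ≤ 2 * k) ⊆ Ico 1 n := fun k hk ↦ by
    simp only [mem_filter, mem_range, mem_Ico] at hk ⊢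
    lia
  calc ∑ k ∈ (range n).filter (fun k ↦ n ≤ 2 * k),
        (k : ℝ) ^ m / q ^ k * (1 / (1 - (k : ℝ) / n))
      ≤ ∑ k ∈ (range n).filter (fun k ↦ n ≤ 2 * k),
          (n : ℝ) / b ^ ((n : ℝ) / 2) * ((k : ℝ) ^ m * (1 / (a * q)) ^ k) := by
        refine sum_le_sum fun k hk ↦ ?_
        obtain ⟨hkn, hnk⟩ := mem_filter.1 hk
        exact pow_div_pow_mul_one_div_one_sub_div_le ha hb hab hq m (mem_range.1 hkn) hnk
    _ ≤ ∑ k ∈ Ico 1 n, (n : ℝ) / b ^ ((n : ℝ) / 2) * ((k : ℝ) ^ m * (1 / (a * q)) ^ k) :=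
        sum_le_sum_of_subset_of_nonneg hsubset fun k _ _ ↦ by positivity
    _ = (n : ℝ) / b ^ ((n : ℝ) / 2) * ∑ k ∈ Ico 1 n, (k : ℝ) ^ m * (1 / (a * q)) ^ k :=
        (mul_sum ..).symm
    _ ≤ (n : ℝ) / b ^ ((n : ℝ) / 2) *
          (1 / (a * q) * (m.factorial / (1 - 1 / (a * q)) ^ (m + 1))) := by
        gcongr
        exact sum_Ico_one_pow_mul_geometric_le (by positivity) hr m n
    _ = _ := by rw [div_mul_div_comm, one_mul, mul_div_assoc]

theorem stmt_8 (q : ℝ) (hq : 2 ≤ q) (n m : ℕ) (hn : 1 ≤ n) (hm : 1 ≤ m) :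
    ∑ k ∈ (Finset.range n).filter (fun k => n ≤ 2 * k),
        (k : ℝ) ^ m / q ^ k * (1 / (1 - (k : ℝ) / n)) ≤
      ((n : ℝ) / (1.3 : ℝ) ^ ((n : ℝ) / 2)) *
        (Nat.factorial m) / (0.75 * q * (1 - 1 / (0.75 * q)) ^ (m + 1)) :=
  stmt_8_general (by norm_num) (by norm_num) (by norm_num) (by linarith) n m
end
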